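/- Let n ≥ 1 and k ≥ 1. For every density matrix ρ on (ℂ^n)^{⊗k} = ℂ^{n^k}: (k−1) · S(ρ) ≤ ∑_{i=1}^k S(ρ_{{1,…,k}∖{i}}), where ρ_{{1,…,k}∖{i}} is the reduced density matrix obtained by tracing out the i-th tensor factor, and S is the von Neumann entropy with natural logarithm. -/

import Mathlib

noncomputable section

open scoped BigOperators ComplexOrder
open Matrix

/-- The von Neumann entropy (natural logarithm) `S(ρ) = −tr(ρ ln ρ)`, computed via the
eigenvalues (with the convention `0 ln 0 = 0`). -/
def entropyLn {ι : Type*} [Fintype ι] [DecidableEq ι] (ρ : Matrix ι ι ℂ) : ℝ :=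
  if h : ρ.IsHermitian then -∑ i, h.eigenvalues i * Real.log (h.eigenvalues i) else 0

/-- The reduced density matrix `ρ_A` of `ρ` on `(ℂ^n)^{⊗k}`, obtained by tracing out all
tensor factors with index outside `A`. -/
def reduced {n k : ℕ} (ρ : Matrix (Fin k → Fin n) (Fin k → Fin n) ℂ) (A : Finset (Fin k)) :
    Matrix ({ i : Fin k // i ∈ A } → Fin n) ({ i : Fin k // i ∈ A } → Fin n) ℂ :=
  fun u v => ∑ w : { i : Fin k // i ∉ A } → Fin n,
    ρ (fun i => if h : i ∈ A then u ⟨i, h⟩ else w ⟨i, h⟩)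
      (fun i => if h : i ∈ A then v ⟨i, h⟩ else w ⟨i, h⟩)

/-!
Partial traces are replaced by trace-preserving conditional expectations on one fixed matrix
algebra: `E_A M = tr_{Aᶜ}(M) ⊗ 1 / d_{Aᶜ}` satisfies `E_A E_B = E_{A ∩ B}` and
`S(E_A ρ) = S(ρ_A) + log d_{Aᶜ}` for states `ρ`.

For a conditional expectation `E` the relative entropy is `D(ρ ‖ E ρ) = S(E ρ) - S(ρ)`, so for
commuting `E` and `F` monotonicity of `D(ρ ‖ F ρ)` under `E` is strong subadditivity
`S(ρ) + S(E F ρ) ≤ S(E ρ) + S(F ρ)`. Telescoping it over the sites gives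
`S(E_∅ ρ) - S(ρ) ≤ ∑ i, (S(E_{i}ᶜ ρ) - S(ρ))`, in which the logarithms of the dimensions cancel.

Monotonicity under `E` is proved by writing `D(ρ ‖ σ)` as an integral over `s ∈ [0, 1]`, with weight
`1 - s`, of `χ²`-divergences. Each of them is the maximum over `Y` of the concave quadratic
functional `2 Re tr(Yᴴ (ρ - σ)) - tr(Yᴴ ((1 - s) Y σ + s ρ Y))`.
Passing from `(ρ, σ)` to `(E ρ, E σ)` does not change the functional on the range of `E`, where the
maximum for `(E ρ, E σ)` is attained.
-/

open scoped Kronecker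

section FunctionalCalculus

variable {ι : Type*} [Fintype ι] [DecidableEq ι] {ρ : Matrix ι ι ℂ}

lemma continuousOn_real_spectrum (f : ℝ → ℝ) (A : Matrix ι ι ℂ) :
    ContinuousOn f (spectrum ℝ A) :=
  (Matrix.finite_real_spectrum (A := A)).continuousOn f

lemma cfc_eq_conj_diagonal (hρ : ρ.IsHermitian) (f : ℝ → ℝ) :
    cfc f ρ = (hρ.eigenvectorUnitary : Matrix ι ι ℂ) *
      diagonal (fun i => (f (hρ.eigenvalues i) : ℂ)) *
        (hρ.eigenvectorUnitary : Matrix ι ι ℂ)ᴴ := by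
  rw [hρ.cfc_eq, Matrix.IsHermitian.cfc, Unitary.conjStarAlgAut_apply]
  rfl

lemma conjTranspose_eigenvectorUnitary_mul_self (hρ : ρ.IsHermitian) :
    (hρ.eigenvectorUnitary : Matrix ι ι ℂ)ᴴ * (hρ.eigenvectorUnitary : Matrix ι ι ℂ) = 1 :=
  Unitary.coe_star_mul_self hρ.eigenvectorUnitary

lemma eigenvectorUnitary_mul_conjTranspose_self (hρ : ρ.IsHermitian) :
    (hρ.eigenvectorUnitary : Matrix ι ι ℂ) * (hρ.eigenvectorUnitary : Matrix ι ι ℂ)ᴴ = 1 :=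
  Unitary.coe_mul_star_self hρ.eigenvectorUnitary

lemma trace_cfc_eq_sum_eigenvalues (hρ : ρ.IsHermitian) (f : ℝ → ℝ) :
    trace (cfc f ρ) = ((∑ i, f (hρ.eigenvalues i) : ℝ) : ℂ) := by
  rw [cfc_eq_conj_diagonal hρ, trace_mul_comm, ← Matrix.mul_assoc,
    conjTranspose_eigenvectorUnitary_mul_self, Matrix.one_mul, trace_diagonal, Complex.ofReal_sum]

lemma entropyLn_eq_trace_cfc (hρ : ρ.IsHermitian) :
    (entropyLn ρ : ℂ) = trace (cfc Real.negMulLog ρ) := by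
  simp only [trace_cfc_eq_sum_eigenvalues hρ, entropyLn, dif_pos hρ, Real.negMulLog, neg_mul,
    Finset.sum_neg_distrib]

lemma entropyLn_cfc (hρ : ρ.IsHermitian) (f : ℝ → ℝ) :
    entropyLn (cfc f ρ) = ∑ i, Real.negMulLog (f (hρ.eigenvalues i)) := by
  have hherm : (cfc f ρ).IsHermitian := cfc_predicate f ρ
  have h := entropyLn_eq_trace_cfc hherm
  rw [← cfc_comp' Real.negMulLog f ρ Real.continuous_negMulLog.continuousOn
    (continuousOn_real_spectrum _ _) hρ.isSelfAdjoint, trace_cfc_eq_sum_eigenvalues hρ] at h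
  exact_mod_cast h

lemma entropyLn_smul (hρ : ρ.IsHermitian) (r : ℝ) :
    entropyLn (r • ρ) = r * entropyLn ρ + Real.negMulLog r * (trace ρ).re := by
  rw [← cfc_const_mul_id r ρ hρ.isSelfAdjoint, entropyLn_cfc hρ]
  simp only [Real.negMulLog_mul, Finset.sum_add_distrib, ← Finset.sum_mul, ← Finset.mul_sum]
  rw [hρ.trace_eq_sum_eigenvalues]
  simp only [entropyLn, dif_pos hρ, Real.negMulLog, neg_mul, Finset.sum_neg_distrib,
    Complex.re_sum, Complex.coe_algebraMap, Complex.ofReal_re]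
  ring

lemma entropyLn_one : entropyLn (1 : Matrix ι ι ℂ) = 0 := by
  have h := entropyLn_eq_trace_cfc (isHermitian_one (n := ι) (α := ℂ))
  rw [cfc_apply_one, Real.negMulLog_one, map_zero, trace_zero] at h
  exact_mod_cast h

lemma entropyLn_of_unique [Unique ι] (hρ : ρ.IsHermitian) :
    entropyLn ρ = Real.negMulLog (trace ρ).re := by
  have hscalar : ρ = (trace ρ).re • (1 : Matrix ι ι ℂ) := by
    ext i j
    obtain rfl := Subsingleton.elim i j
    apply Complex.ext
    · simp [trace, Subsingleton.elim i default]
    · rw [Complex.conj_eq_iff_im.1 (hρ.apply i i)]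
      simp
  rw [hscalar, entropyLn_smul isHermitian_one, entropyLn_one]
  simp

lemma continuous_entropyLn_add_smul_one (hρ : ρ.IsHermitian) :
    Continuous fun t : ℝ => entropyLn (ρ + t • 1) := by
  have hshift (t : ℝ) : ρ + t • 1 = cfc (fun x => x + t) ρ := by
    rw [cfc_add_const t (fun x => x) ρ (continuousOn_real_spectrum _ _) hρ.isSelfAdjoint,
      cfc_id' ℝ ρ hρ.isSelfAdjoint, Algebra.algebraMap_eq_smul_one]
  simp_rw [hshift, entropyLn_cfc hρ]
  have := Real.continuous_negMulLog
  fun_prop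

lemma mul_cfc_log_eq_neg_cfc_negMulLog (hρ : ρ.IsHermitian) :
    ρ * cfc Real.log ρ = -cfc Real.negMulLog ρ := by
  have hmul : cfc (fun x => x * Real.log x) ρ = ρ * cfc Real.log ρ := by
    rw [cfc_mul (fun x => x) Real.log ρ (continuousOn_real_spectrum _ _)
      (continuousOn_real_spectrum _ _), cfc_id' ℝ ρ hρ.isSelfAdjoint]
  rw [← hmul, ← cfc_neg]
  simp only [Real.negMulLog_eq_neg, neg_neg]

end FunctionalCalculus

section DoubleOperatorIntegral

variable {ι : Type*} [Fintype ι] [DecidableEq ι] {ρ σ : Matrix ι ι ℂ}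

/-- The matrix of scalar products `⟪u i, v j⟫` between the eigenbases `u` of `ρ` and `v` of `σ`. -/
def eigenbasisOverlap (hρ : ρ.IsHermitian) (hσ : σ.IsHermitian) : Matrix ι ι ℂ :=
  (hρ.eigenvectorUnitary : Matrix ι ι ℂ)ᴴ * (hσ.eigenvectorUnitary : Matrix ι ι ℂ)

/-- The double operator integral `∑ h(p, q) P_p Q_q` of a kernel `h`, where `P_p` and `Q_q` are the
spectral projections of `ρ` and `σ`; it turns scalar identities in `(p, q)` into identities between
products of functions of `ρ` (on the left) and of `σ` (on the right). -/
def doubleOperatorIntegral (hρ : ρ.IsHermitian) (hσ : σ.IsHermitian) :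
    (ℝ → ℝ → ℝ) →ₗ[ℝ] Matrix ι ι ℂ where
  toFun h := (hρ.eigenvectorUnitary : Matrix ι ι ℂ) *
    ((of fun i j => (h (hρ.eigenvalues i) (hσ.eigenvalues j) : ℂ)) ⊙ eigenbasisOverlap hρ hσ) *
    (hσ.eigenvectorUnitary : Matrix ι ι ℂ)ᴴ
  map_add' g h := by
    rw [← Matrix.add_mul, ← Matrix.mul_add, ← add_hadamard]
    congr 3
    ext i j
    simp
  map_smul' r h := by
    rw [RingHom.id_apply, ← Matrix.smul_mul, ← Matrix.mul_smul, ← smul_hadamard]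
    congr 3
    ext i j
    simp

/-- The sum `∑ h(p, q) tr(P_p Q_q)` over the spectra of `ρ` and `σ`, where `P_p` and `Q_q` are the
spectral projections. -/
def spectralSum (hρ : ρ.IsHermitian) (hσ : σ.IsHermitian) (h : ℝ → ℝ → ℝ) : ℝ :=
  ∑ i, ∑ j, ‖eigenbasisOverlap hρ hσ i j‖ ^ 2 * h (hρ.eigenvalues i) (hσ.eigenvalues j)

variable (hρ : ρ.IsHermitian) (hσ : σ.IsHermitian)

lemma doubleOperatorIntegral_apply (h : ℝ → ℝ → ℝ) :
    doubleOperatorIntegral hρ hσ h = (hρ.eigenvectorUnitary : Matrix ι ι ℂ) *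
      ((of fun i j => (h (hρ.eigenvalues i) (hσ.eigenvalues j) : ℂ)) ⊙ eigenbasisOverlap hρ hσ) *
      (hσ.eigenvectorUnitary : Matrix ι ι ℂ)ᴴ :=
  rfl

lemma doubleOperatorIntegral_one : doubleOperatorIntegral hρ hσ (fun _ _ => 1) = 1 := by
  have hones : (of fun _ _ => ((1 : ℝ) : ℂ)) ⊙ eigenbasisOverlap hρ hσ =
      eigenbasisOverlap hρ hσ := by
    ext i j
    simp
  rw [doubleOperatorIntegral_apply, hones, eigenbasisOverlap, ← Matrix.mul_assoc,
    eigenvectorUnitary_mul_conjTranspose_self, Matrix.one_mul,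
    eigenvectorUnitary_mul_conjTranspose_self]

lemma cfc_mul_doubleOperatorIntegral (f : ℝ → ℝ) (h : ℝ → ℝ → ℝ) :
    cfc f ρ * doubleOperatorIntegral hρ hσ h =
      doubleOperatorIntegral hρ hσ (fun p q => f p * h p q) := by
  simp only [cfc_eq_conj_diagonal hρ, doubleOperatorIntegral_apply, Matrix.mul_assoc]
  rw [← Matrix.mul_assoc _ᴴ, conjTranspose_eigenvectorUnitary_mul_self, Matrix.one_mul,
    ← Matrix.mul_assoc (diagonal _)]
  congr 2
  ext i j
  simp [diagonal_mul, mul_assoc]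

lemma doubleOperatorIntegral_mul_cfc (h : ℝ → ℝ → ℝ) (g : ℝ → ℝ) :
    doubleOperatorIntegral hρ hσ h * cfc g σ =
      doubleOperatorIntegral hρ hσ (fun p q => h p q * g q) := by
  simp only [cfc_eq_conj_diagonal hσ, doubleOperatorIntegral_apply, ← Matrix.mul_assoc]
  rw [Matrix.mul_assoc _ _ᴴ, conjTranspose_eigenvectorUnitary_mul_self, Matrix.mul_one,
    Matrix.mul_assoc _ _ (diagonal _)]
  congr 2
  ext i j
  simp only [mul_diagonal, hadamard_apply, of_apply, Complex.ofReal_mul]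
  ring

lemma doubleOperatorIntegral_left (f : ℝ → ℝ) :
    doubleOperatorIntegral hρ hσ (fun p _ => f p) = cfc f ρ := by
  simpa only [doubleOperatorIntegral_one, mul_one] using
    (cfc_mul_doubleOperatorIntegral hρ hσ f (fun _ _ => 1)).symm

lemma doubleOperatorIntegral_right (g : ℝ → ℝ) :
    doubleOperatorIntegral hρ hσ (fun _ q => g q) = cfc g σ := by
  simpa only [doubleOperatorIntegral_one, one_mul] using
    (doubleOperatorIntegral_mul_cfc hρ hσ (fun _ _ => 1) g).symm

lemma mul_doubleOperatorIntegral (h : ℝ → ℝ → ℝ) :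
    ρ * doubleOperatorIntegral hρ hσ h = doubleOperatorIntegral hρ hσ (fun p q => p * h p q) := by
  simpa only [cfc_id' ℝ ρ hρ.isSelfAdjoint] using
    cfc_mul_doubleOperatorIntegral hρ hσ (fun p => p) h

lemma doubleOperatorIntegral_mul (h : ℝ → ℝ → ℝ) :
    doubleOperatorIntegral hρ hσ h * σ = doubleOperatorIntegral hρ hσ (fun p q => h p q * q) := by
  simpa only [cfc_id' ℝ σ hσ.isSelfAdjoint] using
    doubleOperatorIntegral_mul_cfc hρ hσ h (fun q => q)

lemma doubleOperatorIntegral_sub :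
    doubleOperatorIntegral hρ hσ (fun p q => p - q) = ρ - σ := by
  have hleft := doubleOperatorIntegral_left hρ hσ (fun p => p)
  have hright := doubleOperatorIntegral_right hρ hσ (fun q => q)
  rw [cfc_id' ℝ ρ hρ.isSelfAdjoint] at hleft
  rw [cfc_id' ℝ σ hσ.isSelfAdjoint] at hright
  exact (map_sub (doubleOperatorIntegral hρ hσ) _ _).trans (congrArg₂ (· - ·) hleft hright)

lemma doubleOperatorIntegral_congr {g h : ℝ → ℝ → ℝ}
    (hgh : ∀ i j, g (hρ.eigenvalues i) (hσ.eigenvalues j) =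
      h (hρ.eigenvalues i) (hσ.eigenvalues j)) :
    doubleOperatorIntegral hρ hσ g = doubleOperatorIntegral hρ hσ h := by
  simp only [doubleOperatorIntegral_apply, hgh]

lemma trace_conjTranspose_doubleOperatorIntegral_mul (g h : ℝ → ℝ → ℝ) :
    trace ((doubleOperatorIntegral hρ hσ g)ᴴ * doubleOperatorIntegral hρ hσ h) =
      (spectralSum hρ hσ (fun p q => g p q * h p q) : ℂ) := by
  simp only [doubleOperatorIntegral_apply, conjTranspose_mul, conjTranspose_conjTranspose,
    Matrix.mul_assoc]
  rw [trace_mul_comm, ← Matrix.mul_assoc _ᴴ (hρ.eigenvectorUnitary : Matrix ι ι ℂ),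
    conjTranspose_eigenvectorUnitary_mul_self, Matrix.one_mul]
  simp only [Matrix.mul_assoc]
  rw [conjTranspose_eigenvectorUnitary_mul_self, Matrix.mul_one, spectralSum, Finset.sum_comm]
  simp only [trace, diag, mul_apply, conjTranspose_apply, hadamard_apply, of_apply]
  push_cast
  refine Finset.sum_congr rfl fun j _ => Finset.sum_congr rfl fun i _ => ?_
  rw [← Complex.conj_mul', star_mul', Complex.star_def, Complex.conj_ofReal]
  ring

lemma trace_doubleOperatorIntegral (h : ℝ → ℝ → ℝ) :
    trace (doubleOperatorIntegral hρ hσ h) = (spectralSum hρ hσ h : ℂ) := by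
  simpa only [doubleOperatorIntegral_one, conjTranspose_one, one_mul] using
    trace_conjTranspose_doubleOperatorIntegral_mul hρ hσ (fun _ _ => 1) h

end DoubleOperatorIntegral

section RelativeEntropy

lemma segment_combination_pos {p q s : ℝ} (hp : 0 < p) (hq : 0 < q) (hs : s ∈ Set.Icc (0 : ℝ) 1) :
    0 < (1 - s) * q + s * p := by
  obtain ⟨hs₀, hs₁⟩ := hs
  rcases hs₀.eq_or_lt with rfl | hs₀
  · simpa using hq
  · have := mul_nonneg (sub_nonneg.2 hs₁) hq.le
    have := mul_pos hs₀ hp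
    linarith

lemma continuousOn_sq_div_segment_combination {p q : ℝ} (hp : 0 < p) (hq : 0 < q) :
    ContinuousOn (fun s : ℝ => (1 - s) * ((p - q) ^ 2 / ((1 - s) * q + s * p)))
      (Set.Icc 0 1) :=
  ContinuousOn.mul (by fun_prop) <| ContinuousOn.div (by fun_prop) (by fun_prop)
    fun _ hs => (segment_combination_pos hp hq hs).ne'

/-- Taylor's formula with integral remainder for `p ↦ p * log p` at `q`. -/
lemma integral_sq_div_segment_combination {p q : ℝ} (hp : 0 < p) (hq : 0 < q) :
    ∫ s in (0 : ℝ)..1, (1 - s) * ((p - q) ^ 2 / ((1 - s) * q + s * p)) =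
      p * Real.log p - p * Real.log q - p + q := by
  have hderiv : ∀ s ∈ Set.uIcc (0 : ℝ) 1,
      HasDerivAt (fun s : ℝ => p * Real.log ((1 - s) * q + s * p) - s * (p - q))
        ((1 - s) * ((p - q) ^ 2 / ((1 - s) * q + s * p))) s := by
    intro s hs
    rw [Set.uIcc_of_le zero_le_one] at hs
    have hpos := (segment_combination_pos hp hq hs).ne'
    have hsegment : HasDerivAt (fun s : ℝ => (1 - s) * q + s * p) (-1 * q + 1 * p) s :=
      (((hasDerivAt_id s).const_sub 1).mul_const q).add ((hasDerivAt_id s).mul_const p)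
    refine (((hsegment.log hpos).const_mul p).sub
      ((hasDerivAt_id s).mul_const (p - q))).congr_deriv ?_
    rw [mul_div_assoc', sub_eq_iff_eq_add, mul_div_assoc', div_add' _ _ _ hpos]
    ring
  have hint : IntervalIntegrable (fun s : ℝ => (1 - s) * ((p - q) ^ 2 / ((1 - s) * q + s * p)))
      MeasureTheory.volume 0 1 :=
    (continuousOn_sq_div_segment_combination hp hq).intervalIntegrable_of_Icc zero_le_one
  rw [intervalIntegral.integral_eq_sub_of_hasDerivAt hderiv hint]
  simp only [sub_self, zero_mul, one_mul, zero_add, sub_zero, add_zero]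
  ring

variable {ι : Type*} [Fintype ι] [DecidableEq ι] {ρ σ : Matrix ι ι ℂ}

/-- The relative entropy `tr(ρ (log ρ - log σ)) - tr ρ + tr σ`, with the linear correction that
makes it the Bregman divergence of `-S` for arguments of any trace. It is meaningful for positive
definite `ρ` and `σ`. -/
def relEntropy (ρ σ : Matrix ι ι ℂ) : ℝ :=
  (trace (ρ * (cfc Real.log ρ - cfc Real.log σ) - ρ + σ)).re

/-- The quantum `χ²`-divergence of `ρ` and `σ` whose reference operator is the convex combination of
right multiplication by `σ` and left multiplication by `ρ` with weights `1 - s` and `s`. -/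
def chiSqDivergence (hρ : ρ.IsHermitian) (hσ : σ.IsHermitian) (s : ℝ) : ℝ :=
  spectralSum hρ hσ fun p q => (p - q) ^ 2 / ((1 - s) * q + s * p)

lemma relEntropy_eq_spectralSum (hρ : ρ.IsHermitian) (hσ : σ.IsHermitian) :
    relEntropy ρ σ =
      spectralSum hρ hσ (fun p q => p * Real.log p - p * Real.log q - p + q) := by
  have hoperator : ρ * (cfc Real.log ρ - cfc Real.log σ) - ρ + σ =
      doubleOperatorIntegral hρ hσ (fun p q => p * Real.log p - p * Real.log q - p + q) := by
    rw [sub_add, ← doubleOperatorIntegral_left hρ hσ, ← doubleOperatorIntegral_right hρ hσ,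
      ← doubleOperatorIntegral_sub hρ hσ, ← map_sub, mul_doubleOperatorIntegral, ← map_sub]
    congr 1
    ext p q
    simp only [Pi.sub_apply]
    ring
  rw [relEntropy, hoperator, trace_doubleOperatorIntegral, Complex.ofReal_re]

lemma continuousOn_chiSqDivergence (hρ : ρ.PosDef) (hσ : σ.PosDef) :
    ContinuousOn (fun s => (1 - s) * chiSqDivergence hρ.isHermitian hσ.isHermitian s)
      (Set.Icc 0 1) := by
  simp only [chiSqDivergence, spectralSum, Finset.mul_sum, mul_left_comm (1 - _ : ℝ)]
  exact continuousOn_finsetSum _ fun i _ => continuousOn_finsetSum _ fun j _ =>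
    continuousOn_const.mul <|
      continuousOn_sq_div_segment_combination (hρ.eigenvalues_pos i) (hσ.eigenvalues_pos j)

lemma relEntropy_eq_integral_chiSqDivergence (hρ : ρ.PosDef) (hσ : σ.PosDef) :
    relEntropy ρ σ =
      ∫ s in (0 : ℝ)..1, (1 - s) * chiSqDivergence hρ.isHermitian hσ.isHermitian s := by
  let w (i j : ι) : ℝ := ‖eigenbasisOverlap hρ.isHermitian hσ.isHermitian i j‖ ^ 2
  let p := hρ.isHermitian.eigenvalues
  let q := hσ.isHermitian.eigenvalues
  have hint (i j : ι) : IntervalIntegrable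
      (fun s : ℝ => w i j * ((1 - s) * ((p i - q j) ^ 2 / ((1 - s) * q j + s * p i))))
      MeasureTheory.volume 0 1 :=
    (continuousOn_const.mul <| continuousOn_sq_div_segment_combination (hρ.eigenvalues_pos i)
      (hσ.eigenvalues_pos j)).intervalIntegrable_of_Icc zero_le_one
  calc
    relEntropy ρ σ
      = ∑ i, ∑ j, w i j * (p i * Real.log (p i) - p i * Real.log (q j) - p i + q j) :=
        relEntropy_eq_spectralSum hρ.isHermitian hσ.isHermitian
    _ = ∑ i, ∑ j, ∫ s in (0 : ℝ)..1,
          w i j * ((1 - s) * ((p i - q j) ^ 2 / ((1 - s) * q j + s * p i))) := by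
        simp only [intervalIntegral.integral_const_mul,
          integral_sq_div_segment_combination (hρ.eigenvalues_pos _) (hσ.eigenvalues_pos _), p, q]
    _ = ∫ s in (0 : ℝ)..1, ∑ i, ∑ j,
          w i j * ((1 - s) * ((p i - q j) ^ 2 / ((1 - s) * q j + s * p i))) := by
        rw [intervalIntegral.integral_finsetSum fun i _ => by
          simpa only [Finset.sum_fn] using IntervalIntegrable.sum Finset.univ fun j _ => hint i j]
        simp only [intervalIntegral.integral_finsetSum fun j _ => hint _ j]
    _ = _ := by
        simp only [chiSqDivergence, spectralSum, Finset.mul_sum, mul_left_comm (1 - _ : ℝ), w, p, q]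

end RelativeEntropy

section VariationalPrinciple

variable {ι : Type*} [Fintype ι] {ρ σ : Matrix ι ι ℂ} {s : ℝ}

/-- The Sylvester operator `Y ↦ (1 - s) Y σ + s ρ Y`. -/
def sylvester (ρ σ : Matrix ι ι ℂ) (s : ℝ) : Matrix ι ι ℂ →ₗ[ℝ] Matrix ι ι ℂ :=
  (1 - s) • LinearMap.mulRight ℝ σ + s • LinearMap.mulLeft ℝ ρ

/-- The concave quadratic functional `Y ↦ 2 Re tr(Yᴴ (ρ - σ)) - tr(Yᴴ ((1 - s) Y σ + s ρ Y))`, whose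
maximum is the `χ²`-divergence of `ρ` and `σ`. -/
def chiSqFunctional (ρ σ : Matrix ι ι ℂ) (s : ℝ) (Y : Matrix ι ι ℂ) : ℝ :=
  (trace (Yᴴ * ((2 : ℝ) • (ρ - σ) - sylvester ρ σ s Y))).re

lemma sylvester_apply (ρ σ : Matrix ι ι ℂ) (s : ℝ) (Y : Matrix ι ι ℂ) :
    sylvester ρ σ s Y = (1 - s) • (Y * σ) + s • (ρ * Y) :=
  rfl

lemma re_trace_conjTranspose_mul_sylvester_comm (hρ : ρ.IsHermitian) (hσ : σ.IsHermitian)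
    (Y Z : Matrix ι ι ℂ) :
    (trace (Zᴴ * sylvester ρ σ s Y)).re = (trace (Yᴴ * sylvester ρ σ s Z)).re := by
  have hadjoint : trace (Zᴴ * sylvester ρ σ s Y) = star (trace (Yᴴ * sylvester ρ σ s Z)) := by
    rw [← trace_conjTranspose]
    simp only [sylvester_apply, conjTranspose_mul, conjTranspose_add, conjTranspose_smul,
      conjTranspose_conjTranspose, hρ.eq, hσ.eq, star_trivial, Matrix.mul_add,
      trace_add, Matrix.mul_smul, trace_smul, Matrix.mul_assoc]
    rw [trace_mul_comm σ, Matrix.mul_assoc]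
  rw [hadjoint, Complex.star_def, Complex.conj_re]

lemma re_trace_conjTranspose_mul_sylvester_self_nonneg (hρ : ρ.PosSemidef) (hσ : σ.PosSemidef)
    (hs : s ∈ Set.Icc (0 : ℝ) 1) (Y : Matrix ι ι ℂ) :
    0 ≤ (trace (Yᴴ * sylvester ρ σ s Y)).re := by
  have hleft : 0 ≤ (trace (Yᴴ * ρ * Y)).re :=
    (Complex.nonneg_iff.1 (hρ.conjTranspose_mul_mul_same Y).trace_nonneg).1
  have hright : 0 ≤ (trace (Y * σ * Yᴴ)).re :=
    (Complex.nonneg_iff.1 (hσ.mul_mul_conjTranspose_same Y).trace_nonneg).1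
  have hsplit : (trace (Yᴴ * sylvester ρ σ s Y)).re =
      (1 - s) * (trace (Y * σ * Yᴴ)).re + s * (trace (Yᴴ * ρ * Y)).re := by
    rw [trace_mul_comm (Y * σ), sylvester_apply, Matrix.mul_add, Matrix.mul_smul, Matrix.mul_smul,
      trace_add, trace_smul, trace_smul, Complex.add_re, Complex.smul_re, Complex.smul_re,
      Matrix.mul_assoc, smul_eq_mul, smul_eq_mul]
  rw [hsplit]
  exact add_nonneg (mul_nonneg (sub_nonneg.2 hs.2) hright) (mul_nonneg hs.1 hleft)

lemma chiSqFunctional_of_sylvester_eq {Y : Matrix ι ι ℂ} (hY : sylvester ρ σ s Y = ρ - σ) :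
    chiSqFunctional ρ σ s Y = (trace (Yᴴ * (ρ - σ))).re := by
  rw [chiSqFunctional, hY, two_smul, add_sub_cancel_right]

/-- Completing the square: the difference of the two sides is `tr((Y - Z)ᴴ L (Y - Z))`, where
`L = sylvester ρ σ s`. -/
lemma chiSqFunctional_le_of_sylvester_eq (hρ : ρ.PosSemidef) (hσ : σ.PosSemidef)
    (hs : s ∈ Set.Icc (0 : ℝ) 1) {Y : Matrix ι ι ℂ} (hY : sylvester ρ σ s Y = ρ - σ)
    (Z : Matrix ι ι ℂ) :
    chiSqFunctional ρ σ s Z ≤ chiSqFunctional ρ σ s Y := by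
  have hsq := re_trace_conjTranspose_mul_sylvester_self_nonneg hρ hσ hs (Y - Z)
  have hcomm := re_trace_conjTranspose_mul_sylvester_comm (s := s) hρ.isHermitian hσ.isHermitian Y Z
  rw [chiSqFunctional_of_sylvester_eq hY, chiSqFunctional, ← hY]
  simp only [map_sub, conjTranspose_sub, Matrix.sub_mul, Matrix.mul_sub, Matrix.mul_smul,
    trace_sub, trace_smul, Complex.sub_re, Complex.smul_re, smul_eq_mul] at hsq ⊢
  linarith

variable [DecidableEq ι]

lemma exists_sylvester_eq_and_chiSqFunctional_eq (hρ : ρ.PosDef) (hσ : σ.PosDef)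
    (hs : s ∈ Set.Icc (0 : ℝ) 1) :
    ∃ Y, sylvester ρ σ s Y = ρ - σ ∧
      chiSqFunctional ρ σ s Y = chiSqDivergence hρ.isHermitian hσ.isHermitian s := by
  let Y := doubleOperatorIntegral hρ.isHermitian hσ.isHermitian fun p q =>
    (p - q) / ((1 - s) * q + s * p)
  have hpos (i j : ι) :=
    segment_combination_pos (hρ.eigenvalues_pos i) (hσ.eigenvalues_pos j) hs
  have hY : sylvester ρ σ s Y = ρ - σ := by
    rw [sylvester_apply, doubleOperatorIntegral_mul, mul_doubleOperatorIntegral, ← map_smul,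
      ← map_smul, ← map_add, ← doubleOperatorIntegral_sub hρ.isHermitian hσ.isHermitian]
    refine doubleOperatorIntegral_congr _ _ fun i j => ?_
    simp only [Pi.add_apply, Pi.smul_apply, smul_eq_mul]
    linear_combination div_mul_cancel₀ (hρ.isHermitian.eigenvalues i -
      hσ.isHermitian.eigenvalues j) (hpos i j).ne'
  refine ⟨Y, hY, ?_⟩
  rw [chiSqFunctional_of_sylvester_eq hY, chiSqDivergence,
    ← doubleOperatorIntegral_sub hρ.isHermitian hσ.isHermitian,
    trace_conjTranspose_doubleOperatorIntegral_mul, Complex.ofReal_re]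
  congr 1
  ext p q
  ring

end VariationalPrinciple

section ConditionalExpectation

variable {ι : Type*} [Fintype ι] [DecidableEq ι]

/-- `E` is the trace-preserving conditional expectation onto a unital `*`-subalgebra of the matrix
algebra, namely its set of fixed points. Of the positivity of `E` only the preservation of positive
definiteness is recorded. -/
structure IsCondExp (E : Matrix ι ι ℂ →ₗ[ℂ] Matrix ι ι ℂ) : Prop where
  map_one : E 1 = 1
  map_map_mul : ∀ A B, E (E A * B) = E A * E B
  map_conjTranspose : ∀ A, E Aᴴ = (E A)ᴴ
  trace_map : ∀ A, trace (E A) = trace A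
  posDef_map : ∀ {A}, A.PosDef → (E A).PosDef

namespace IsCondExp

variable {E F : Matrix ι ι ℂ →ₗ[ℂ] Matrix ι ι ℂ}

lemma map_map (hE : IsCondExp E) (A : Matrix ι ι ℂ) : E (E A) = E A := by
  simpa only [mul_one, hE.map_one] using hE.map_map_mul A 1

lemma isHermitian_map (hE : IsCondExp E) {A : Matrix ι ι ℂ} (hA : A.IsHermitian) :
    (E A).IsHermitian := by
  rw [IsHermitian, ← hE.map_conjTranspose, hA.eq]

lemma map_mul_map (hE : IsCondExp E) (A B : Matrix ι ι ℂ) : E (A * E B) = E A * E B := by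
  rw [← conjTranspose_inj, ← hE.map_conjTranspose, conjTranspose_mul, conjTranspose_mul,
    ← hE.map_conjTranspose B, hE.map_map_mul, hE.map_conjTranspose A]

lemma trace_map_mul (hE : IsCondExp E) (A B : Matrix ι ι ℂ) :
    trace (E A * B) = trace (E A * E B) := by
  rw [← hE.map_map_mul, hE.trace_map]

lemma map_cfc (hE : IsCondExp E) {A : Matrix ι ι ℂ} (hA : E A = A) (f : ℝ → ℝ) :
    E (cfc f A) = cfc f A := by
  let fixedPoints : StarSubalgebra ℂ (Matrix ι ι ℂ) :=
    { carrier := {B | E B = B}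
      mul_mem' := fun {B C} (hB : E B = B) (hC : E C = C) => show E (B * C) = B * C by
        rw [← hB, hE.map_map_mul, hC]
      add_mem' := fun {B C} (hB : E B = B) (hC : E C = C) => show E (B + C) = B + C by
        rw [map_add, hB, hC]
      algebraMap_mem' := fun r => show E (algebraMap ℂ _ r) = algebraMap ℂ _ r by
        rw [Algebra.algebraMap_eq_smul_one, map_smul, hE.map_one]
      star_mem' := fun {B} (hB : E B = B) => show E (star B) = star B by
        rw [star_eq_conjTranspose, hE.map_conjTranspose, hB] }
  have : IsClosed (fixedPoints : Set (Matrix ι ι ℂ)) :=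
    isClosed_eq E.continuous_of_finiteDimensional continuous_id
  exact cfc_mem (𝕜' := ℂ) (s := fixedPoints) f hA

variable {ρ σ : Matrix ι ι ℂ}

lemma sylvester_map (hE : IsCondExp E) {s : ℝ} {Y : Matrix ι ι ℂ}
    (hY : sylvester (E ρ) (E σ) s Y = E ρ - E σ) :
    sylvester (E ρ) (E σ) s (E Y) = E ρ - E σ := by
  have h := congrArg E hY
  rwa [sylvester_apply, map_add, LinearMap.map_smul_of_tower, LinearMap.map_smul_of_tower,
    hE.map_mul_map, hE.map_map_mul, map_sub, hE.map_map, hE.map_map] at h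

lemma chiSqFunctional_map (hE : IsCondExp E) (s : ℝ) (Y : Matrix ι ι ℂ) :
    chiSqFunctional ρ σ s (E Y) = chiSqFunctional (E ρ) (E σ) s (E Y) := by
  rw [chiSqFunctional, ← hE.map_conjTranspose, hE.trace_map_mul, map_sub,
    LinearMap.map_smul_of_tower, map_sub, sylvester_apply, map_add, LinearMap.map_smul_of_tower,
    LinearMap.map_smul_of_tower, hE.map_map_mul, hE.map_mul_map, chiSqFunctional, sylvester_apply,
    hE.map_conjTranspose]

theorem chiSqDivergence_map_le (hE : IsCondExp E) (hρ : ρ.PosDef) (hσ : σ.PosDef) {s : ℝ}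
    (hs : s ∈ Set.Icc (0 : ℝ) 1) :
    chiSqDivergence (hE.posDef_map hρ).isHermitian (hE.posDef_map hσ).isHermitian s ≤
      chiSqDivergence hρ.isHermitian hσ.isHermitian s := by
  obtain ⟨Y, hY, hY_eq⟩ := exists_sylvester_eq_and_chiSqFunctional_eq hρ hσ hs
  obtain ⟨Z, hZ, hZ_eq⟩ :=
    exists_sylvester_eq_and_chiSqFunctional_eq (hE.posDef_map hρ) (hE.posDef_map hσ) hs
  calc
    _ = chiSqFunctional (E ρ) (E σ) s Z := hZ_eq.symm
    _ ≤ chiSqFunctional (E ρ) (E σ) s (E Z) :=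
      chiSqFunctional_le_of_sylvester_eq (hE.posDef_map hρ).posSemidef
        (hE.posDef_map hσ).posSemidef hs (hE.sylvester_map hZ) Z
    _ = chiSqFunctional ρ σ s (E Z) := (hE.chiSqFunctional_map s Z).symm
    _ ≤ chiSqFunctional ρ σ s Y :=
      chiSqFunctional_le_of_sylvester_eq hρ.posSemidef hσ.posSemidef hs hY (E Z)
    _ = _ := hY_eq

theorem relEntropy_map_le (hE : IsCondExp E) (hρ : ρ.PosDef) (hσ : σ.PosDef) :
    relEntropy (E ρ) (E σ) ≤ relEntropy ρ σ := by
  rw [relEntropy_eq_integral_chiSqDivergence hρ hσ,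
    relEntropy_eq_integral_chiSqDivergence (hE.posDef_map hρ) (hE.posDef_map hσ)]
  refine intervalIntegral.integral_mono_on zero_le_one
    (ContinuousOn.intervalIntegrable_of_Icc zero_le_one <|
      continuousOn_chiSqDivergence (hE.posDef_map hρ) (hE.posDef_map hσ))
    (ContinuousOn.intervalIntegrable_of_Icc zero_le_one <| continuousOn_chiSqDivergence hρ hσ)
    fun s hs => ?_
  exact mul_le_mul_of_nonneg_left (hE.chiSqDivergence_map_le hρ hσ hs) (sub_nonneg.2 hs.2)

lemma relEntropy_self_map (hE : IsCondExp E) (hρ : ρ.IsHermitian) :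
    relEntropy ρ (E ρ) = entropyLn (E ρ) - entropyLn ρ := by
  have hcross : trace (ρ * cfc Real.log (E ρ)) = -(entropyLn (E ρ) : ℂ) := by
    rw [← hE.map_cfc (hE.map_map ρ), trace_mul_comm, hE.trace_map_mul, trace_mul_comm,
      hE.map_cfc (hE.map_map ρ), mul_cfc_log_eq_neg_cfc_negMulLog (hE.isHermitian_map hρ),
      trace_neg, ← entropyLn_eq_trace_cfc (hE.isHermitian_map hρ)]
  rw [relEntropy, Matrix.mul_sub, trace_add, trace_sub, trace_sub, hcross, hE.trace_map,
    mul_cfc_log_eq_neg_cfc_negMulLog hρ, trace_neg, ← entropyLn_eq_trace_cfc hρ, sub_add_cancel,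
    sub_neg_eq_add, Complex.add_re, Complex.neg_re, Complex.ofReal_re, Complex.ofReal_re]
  ring

lemma entropyLn_add_entropyLn_le_of_posDef (hE : IsCondExp E) (hF : IsCondExp F)
    (hEF : ∀ A, E (F A) = F (E A)) (hρ : ρ.PosDef) :
    entropyLn ρ + entropyLn (E (F ρ)) ≤ entropyLn (E ρ) + entropyLn (F ρ) := by
  have hmono := hE.relEntropy_map_le hρ (hF.posDef_map hρ)
  rw [hEF, hF.relEntropy_self_map hρ.isHermitian,
    hF.relEntropy_self_map (hE.posDef_map hρ).isHermitian] at hmono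
  rw [hEF]
  linarith

/-- Strong subadditivity, as a commuting square: for a tripartite `ρ_ABC`, take for `E` and `F` the
conditional expectations onto the algebras of `AB` and `BC`. -/
theorem entropyLn_add_entropyLn_le (hE : IsCondExp E) (hF : IsCondExp F)
    (hEF : ∀ A, E (F A) = F (E A)) (hρ : ρ.PosSemidef) :
    entropyLn ρ + entropyLn (E (F ρ)) ≤ entropyLn (E ρ) + entropyLn (F ρ) := by
  have hcont {A : Matrix ι ι ℂ} (hA : A.IsHermitian) :
      Filter.Tendsto (fun t : ℝ => entropyLn (A + t • (1 : Matrix ι ι ℂ)))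
        (nhdsWithin 0 (Set.Ioi 0)) (nhds (entropyLn A)) := by
    simpa using ((continuous_entropyLn_add_smul_one hA).tendsto 0).mono_left nhdsWithin_le_nhds
  have hherm := hρ.isHermitian
  refine le_of_tendsto_of_tendsto
    ((hcont hherm).add (hcont (hE.isHermitian_map (hF.isHermitian_map hherm))))
    ((hcont (hE.isHermitian_map hherm)).add (hcont (hF.isHermitian_map hherm)))
    (eventually_nhdsWithin_of_forall fun t ht => ?_)
  have hposDef : (ρ + t • (1 : Matrix ι ι ℂ)).PosDef :=
    PosDef.posSemidef_add hρ (PosDef.one.smul ht)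
  simpa only [map_add, LinearMap.map_smul_of_tower, hE.map_one, hF.map_one] using
    hE.entropyLn_add_entropyLn_le_of_posDef hF hEF hposDef

end IsCondExp

end ConditionalExpectation

section PartialTrace

variable {ι X Y : Type*} [Fintype Y] (e : ι ≃ X × Y)

/-- The partial trace over `Y` of a matrix whose index type is factored as `X × Y` by `e`. -/
def partialTrace : Matrix ι ι ℂ →ₗ[ℂ] Matrix X X ℂ where
  toFun M := of fun x x' => ∑ y, M (e.symm (x, y)) (e.symm (x', y))
  map_add' M N := by
    ext x x'
    simp [Finset.sum_add_distrib]
  map_smul' c M := by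
    ext x x'
    simp [Finset.mul_sum]

lemma partialTrace_apply (M : Matrix ι ι ℂ) (x x' : X) :
    partialTrace e M x x' = ∑ y, M (e.symm (x, y)) (e.symm (x', y)) :=
  rfl

lemma partialTrace_conjTranspose (M : Matrix ι ι ℂ) :
    partialTrace e Mᴴ = (partialTrace e M)ᴴ := by
  ext x x'
  simp only [partialTrace_apply, conjTranspose_apply, star_sum]

lemma partialTrace_one [DecidableEq ι] [DecidableEq X] :
    partialTrace e 1 = Fintype.card Y • 1 := by
  ext x x'
  simp [partialTrace_apply, one_apply]

lemma posDef_partialTrace [Nonempty Y] {M : Matrix ι ι ℂ} (hM : M.PosDef) :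
    (partialTrace e M).PosDef := by
  have hsum : partialTrace e M = ∑ y, M.submatrix (fun x => e.symm (x, y))
      (fun x => e.symm (x, y)) := by
    ext x x'
    simp [partialTrace_apply, Matrix.sum_apply]
  rw [hsum]
  exact posDef_sum Finset.univ_nonempty fun y _ => hM.submatrix fun x x' h => by simpa using h

variable [Fintype ι] [Fintype X]

lemma trace_partialTrace (M : Matrix ι ι ℂ) : trace (partialTrace e M) = trace M := by
  simp only [trace, diag, partialTrace_apply]
  rw [← Fintype.sum_prod_type', ← e.symm.sum_comp]

variable [DecidableEq ι] [DecidableEq X] [DecidableEq Y]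

/-- The embedding `A ↦ A ⊗ 1` of matrices over `X` into matrices over an index type factored as
`X × Y` by `e`. -/
def ampliation : Matrix X X ℂ →⋆ₐ[ℂ] Matrix ι ι ℂ where
  toFun A := (A ⊗ₖ (1 : Matrix Y Y ℂ)).submatrix e e
  map_one' := by rw [one_kronecker_one, submatrix_one_equiv]
  map_mul' A B := by
    rw [submatrix_mul_equiv, ← mul_kronecker_mul, one_mul]
  map_zero' := by rw [zero_kronecker, submatrix_zero]; rfl
  map_add' A B := by rw [add_kronecker, submatrix_add]; rfl
  commutes' r := by
    rw [Algebra.algebraMap_eq_smul_one, smul_kronecker, one_kronecker_one, submatrix_smul,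
      Pi.smul_apply, Pi.smul_apply, submatrix_one_equiv, Algebra.algebraMap_eq_smul_one]
  map_star' A := by
    rw [star_eq_conjTranspose, star_eq_conjTranspose, conjTranspose_submatrix,
      conjTranspose_kronecker, conjTranspose_one]

lemma ampliation_apply (A : Matrix X X ℂ) :
    ampliation e A = (A ⊗ₖ (1 : Matrix Y Y ℂ)).submatrix e e :=
  rfl

lemma trace_ampliation (A : Matrix X X ℂ) : trace (ampliation e A) = Fintype.card Y * trace A := by
  rw [ampliation_apply, mul_comm, ← trace_one, ← trace_kronecker]
  exact e.sum_comp fun x => (A ⊗ₖ (1 : Matrix Y Y ℂ)) x x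

lemma posDef_ampliation {A : Matrix X X ℂ} (hA : A.PosDef) : (ampliation e A).PosDef :=
  (hA.kronecker PosDef.one).submatrix e.injective

lemma entropyLn_ampliation {A : Matrix X X ℂ} (hA : A.IsHermitian) :
    entropyLn (ampliation e A) = Fintype.card Y * entropyLn A := by
  have hherm : (ampliation e A).IsHermitian := hA.isSelfAdjoint.map (ampliation e)
  have hcont : Continuous (ampliation e) :=
    (ampliation e).toLinearMap.continuous_of_finiteDimensional
  have h := entropyLn_eq_trace_cfc hherm
  rw [← StarAlgHomClass.map_cfc (ampliation e) Real.negMulLog A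
    Real.continuous_negMulLog.continuousOn hcont hA.isSelfAdjoint hherm.isSelfAdjoint,
    trace_ampliation, ← entropyLn_eq_trace_cfc hA] at h
  exact_mod_cast h

lemma partialTrace_ampliation_mul (A : Matrix X X ℂ) (M : Matrix ι ι ℂ) :
    partialTrace e (ampliation e A * M) = A * partialTrace e M := by
  ext x x'
  simp only [partialTrace_apply, ampliation_apply, mul_apply, ← e.symm.sum_comp,
    Fintype.sum_prod_type, submatrix_apply, Equiv.apply_symm_apply, kroneckerMap_apply, one_apply,
    mul_ite, mul_one, mul_zero, ite_mul, zero_mul, Finset.sum_ite_eq, Finset.mem_univ, if_true,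
    Finset.mul_sum]
  exact Finset.sum_comm

/-- The conditional expectation `M ↦ tr_Y(M) ⊗ 1 / |Y|` onto the matrices of the form `A ⊗ 1`. -/
def condExp : Matrix ι ι ℂ →ₗ[ℂ] Matrix ι ι ℂ :=
  (Fintype.card Y : ℝ)⁻¹ • ((ampliation e).toLinearMap ∘ₗ partialTrace e)

lemma condExp_apply (M : Matrix ι ι ℂ) :
    condExp e M = (Fintype.card Y : ℝ)⁻¹ • ampliation e (partialTrace e M) :=
  rfl

lemma condExp_apply_apply (M : Matrix ι ι ℂ) (i j : ι) :
    condExp e M i j = if (e i).2 = (e j).2 then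
      (Fintype.card Y : ℝ)⁻¹ • partialTrace e M (e i).1 (e j).1 else 0 := by
  rw [condExp_apply, Matrix.smul_apply, ampliation_apply, submatrix_apply]
  simp only [kroneckerMap_apply, one_apply, mul_ite, mul_one, mul_zero, smul_ite, smul_zero]

theorem isCondExp_condExp [Nonempty Y] : IsCondExp (condExp e) where
  map_one := by
    rw [condExp_apply, partialTrace_one, map_nsmul, map_one, ← Nat.cast_smul_eq_nsmul ℝ,
      inv_smul_smul₀ (Nat.cast_ne_zero.2 Fintype.card_ne_zero)]
  map_map_mul A B := by
    simp only [condExp_apply, smul_mul_assoc, LinearMap.map_smul_of_tower,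
      partialTrace_ampliation_mul, map_mul, mul_smul_comm]
  map_conjTranspose A := by
    rw [condExp_apply, partialTrace_conjTranspose, ← star_eq_conjTranspose, map_star,
      star_eq_conjTranspose, condExp_apply, conjTranspose_smul, star_trivial]
  trace_map A := by
    rw [condExp_apply, trace_smul, trace_ampliation, trace_partialTrace, ← nsmul_eq_mul,
      ← Nat.cast_smul_eq_nsmul ℝ, inv_smul_smul₀ (Nat.cast_ne_zero.2 Fintype.card_ne_zero)]
  posDef_map {A} hA := by
    rw [condExp_apply]
    exact (posDef_ampliation e (posDef_partialTrace e hA)).smul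
      (inv_pos.2 (Nat.cast_pos.2 Fintype.card_pos))

lemma entropyLn_condExp [Nonempty Y] {ρ : Matrix ι ι ℂ} (hρ : ρ.IsHermitian) :
    entropyLn (condExp e ρ) =
      entropyLn (partialTrace e ρ) + Real.log (Fintype.card Y) * (trace ρ).re := by
  have hpartial : (partialTrace e ρ).IsHermitian := by
    rw [IsHermitian, ← partialTrace_conjTranspose, hρ.eq]
  have hampliation : (ampliation e (partialTrace e ρ)).IsHermitian :=
    hpartial.isSelfAdjoint.map (ampliation e)
  have hcard : (Fintype.card Y : ℝ) ≠ 0 := Nat.cast_ne_zero.2 Fintype.card_ne_zero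
  rw [condExp_apply, entropyLn_smul hampliation, entropyLn_ampliation e hpartial,
    inv_mul_cancel_left₀ hcard, trace_ampliation, trace_partialTrace, ← Complex.ofReal_natCast,
    Complex.re_ofReal_mul, Real.negMulLog, Real.log_inv, neg_mul_neg]
  field_simp

end PartialTrace

section Marginal

variable {ι : Type*} [DecidableEq ι] {α : ι → Type*}

lemma piecewise_eq_piEquivPiSubtypeProd_symm (A : Finset ι) (x z : ∀ i, α i) :
    A.piecewise x z = (Equiv.piEquivPiSubtypeProd (· ∈ A) α).symm
      ((Equiv.piEquivPiSubtypeProd (· ∈ A) α x).1, (Equiv.piEquivPiSubtypeProd (· ∈ A) α z).2) := by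
  ext i
  by_cases hi : i ∈ A <;> simp [hi]

lemma piecewise_piecewise_inter (A B : Finset ι) (x z w : ∀ i, α i) :
    B.piecewise (A.piecewise x z) w = (A ∩ B).piecewise x (B.piecewise z w) := by
  ext i
  by_cases hA : i ∈ A <;> by_cases hB : i ∈ B <;> simp [hA, hB]

lemma forall_notMem_piecewise_eq_iff {A B : Finset ι} {x y : ∀ i, α i}
    (hxy : ∀ i ∉ A, x i = y i) (z : ∀ i, α i) :
    (∀ i ∉ B, A.piecewise x z i = A.piecewise y z i) ↔ ∀ i ∉ A ∩ B, x i = y i := by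
  refine forall_congr' fun i => ?_
  by_cases hA : i ∈ A
  · simp [hA]
  · simp [hA, hxy i hA]

variable [Fintype ι] [∀ i, Fintype (α i)]

lemma sum_sum_piecewise {R : Type*} [AddCommMonoid R] (A : Finset ι) (g : (∀ i, α i) → R) :
    ∑ z, ∑ w, g (A.piecewise z w) = Fintype.card (∀ i, α i) • ∑ z, g z := by
  have hinvolutive : Function.Involutive fun p : (∀ i, α i) × (∀ i, α i) =>
      (A.piecewise p.1 p.2, A.piecewise p.2 p.1) := fun p => by
    ext i <;> by_cases hi : i ∈ A <;> simp [hi]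
  rw [← Fintype.sum_prod_type' (f := fun z w => g (A.piecewise z w)),
    (hinvolutive.bijective.sum_comp fun p => g p.1 : _), Fintype.sum_prod_type]
  simp only [Finset.sum_const, Finset.card_univ, Finset.smul_sum]

/-- The marginal on the sites in `A` of a matrix on a tensor product over the sites `ι`, where
`α i` indexes a basis of the tensor factor at `i`. -/
def marginal (ρ : Matrix (∀ i, α i) (∀ i, α i) ℂ) (A : Finset ι) :
    Matrix (∀ i : {i // i ∈ A}, α i) (∀ i : {i // i ∈ A}, α i) ℂ :=
  partialTrace (Equiv.piEquivPiSubtypeProd (· ∈ A) α) ρ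

variable [∀ i, DecidableEq (α i)]

lemma entropyLn_marginal_empty {ρ : Matrix (∀ i, α i) (∀ i, α i) ℂ} (hρ : ρ.IsHermitian) :
    entropyLn (marginal ρ ∅) = Real.negMulLog (trace ρ).re := by
  have hmarginal : (marginal ρ ∅).IsHermitian := by
    rw [marginal, IsHermitian, ← partialTrace_conjTranspose, hρ.eq]
  rw [entropyLn_of_unique hmarginal, marginal, trace_partialTrace]

/-- The conditional expectation onto the matrices supported on the sites in `A`. -/
def siteCondExp (A : Finset ι) :
    Matrix (∀ i, α i) (∀ i, α i) ℂ →ₗ[ℂ] Matrix (∀ i, α i) (∀ i, α i) ℂ :=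
  condExp (Equiv.piEquivPiSubtypeProd (· ∈ A) α)

variable [∀ i, Nonempty (α i)]

lemma isCondExp_siteCondExp (A : Finset ι) : IsCondExp (siteCondExp (α := α) A) :=
  isCondExp_condExp _

lemma siteCondExp_apply (A : Finset ι) (M : Matrix (∀ i, α i) (∀ i, α i) ℂ) (x y : ∀ i, α i) :
    siteCondExp A M x y = if ∀ i ∉ A, x i = y i then
      (Fintype.card (∀ i, α i) : ℝ)⁻¹ • ∑ z, M (A.piecewise x z) (A.piecewise y z) else 0 := by
  let e := Equiv.piEquivPiSubtypeProd (· ∈ A) α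
  have hoffA : (e x).2 = (e y).2 ↔ ∀ i ∉ A, x i = y i := by
    simp [e, funext_iff]
  have hcard : Fintype.card (∀ i, α i) = Fintype.card (∀ i : {i // i ∈ A}, α i) *
      Fintype.card (∀ i : {i // i ∉ A}, α i) := by
    rw [Fintype.card_congr e, Fintype.card_prod]
  have hcard_ne : (Fintype.card (∀ i : {i // i ∈ A}, α i) : ℝ) ≠ 0 :=
    Nat.cast_ne_zero.2 Fintype.card_ne_zero
  have hsum : ∑ z, M (A.piecewise x z) (A.piecewise y z) =
      (Fintype.card (∀ i : {i // i ∈ A}, α i) : ℝ) • partialTrace e M (e x).1 (e y).1 := by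
    simp only [piecewise_eq_piEquivPiSubtypeProd_symm]
    rw [← e.symm.sum_comp, Fintype.sum_prod_type]
    simp only [e, Equiv.apply_symm_apply, Finset.sum_const, Finset.card_univ, partialTrace_apply,
      Nat.cast_smul_eq_nsmul]
  rw [hsum, hcard, Nat.cast_mul, _root_.mul_inv_rev, mul_smul, inv_smul_smul₀ hcard_ne,
    siteCondExp, condExp_apply_apply]
  simp only [← hoffA, e]

lemma siteCondExp_siteCondExp (A B : Finset ι) (M : Matrix (∀ i, α i) (∀ i, α i) ℂ) :
    siteCondExp A (siteCondExp B M) = siteCondExp (A ∩ B) M := by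
  ext x y
  simp only [siteCondExp_apply]
  by_cases hA : ∀ i ∉ A, x i = y i
  · simp only [if_pos hA, forall_notMem_piecewise_eq_iff hA, piecewise_piecewise_inter]
    split_ifs
    · rw [← Finset.smul_sum,
        sum_sum_piecewise B fun z => M ((A ∩ B).piecewise x z) ((A ∩ B).piecewise y z),
        ← Nat.cast_smul_eq_nsmul ℝ, inv_smul_smul₀ (Nat.cast_ne_zero.2 Fintype.card_ne_zero)]
    · rw [Finset.sum_const_zero, smul_zero]
  · rw [if_neg hA, if_neg fun h => hA fun i hi => h i fun hmem => hi (Finset.mem_inter.1 hmem).1]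

lemma siteCondExp_univ (M : Matrix (∀ i, α i) (∀ i, α i) ℂ) :
    siteCondExp Finset.univ M = M := by
  ext x y
  have hcard : (Fintype.card (∀ i, α i) : ℝ) ≠ 0 := Nat.cast_ne_zero.2 Fintype.card_ne_zero
  simp only [siteCondExp_apply, Finset.mem_univ, not_true_eq_false, false_imp_iff, implies_true,
    if_true, Finset.piecewise_univ, Finset.sum_const, Finset.card_univ]
  rw [← Nat.cast_smul_eq_nsmul ℝ, inv_smul_smul₀ hcard]

lemma entropyLn_siteCondExp (A : Finset ι) {ρ : Matrix (∀ i, α i) (∀ i, α i) ℂ}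
    (hρ : ρ.IsHermitian) :
    entropyLn (siteCondExp A ρ) = entropyLn (marginal ρ A) +
      (∑ i ∈ Aᶜ, Real.log (Fintype.card (α i))) * (trace ρ).re := by
  have hcard : Real.log (Fintype.card (∀ i : {i // i ∉ A}, α i)) =
      ∑ i ∈ Aᶜ, Real.log (Fintype.card (α i)) := by
    rw [Fintype.card_pi, Nat.cast_prod, Real.log_prod fun i _ =>
      Nat.cast_ne_zero.2 Fintype.card_ne_zero]
    exact (Finset.sum_subtype Aᶜ (fun i => Finset.mem_compl)
      fun i => Real.log (Fintype.card (α i))).symm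
  rw [siteCondExp, entropyLn_condExp _ hρ, hcard, marginal]

lemma entropyLn_siteCondExp_compl_sub_le {ρ : Matrix (∀ i, α i) (∀ i, α i) ℂ}
    (hρ : ρ.PosSemidef) (s : Finset ι) :
    entropyLn (siteCondExp sᶜ ρ) - entropyLn ρ ≤
      ∑ i ∈ s, (entropyLn (siteCondExp {i}ᶜ ρ) - entropyLn ρ) := by
  induction s using Finset.induction with
  | empty => simp only [Finset.compl_empty, siteCondExp_univ, sub_self, Finset.sum_empty, le_refl]
  | insert i s hi ih =>
    have hssa := (isCondExp_siteCondExp {i}ᶜ).entropyLn_add_entropyLn_le (isCondExp_siteCondExp sᶜ)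
      (fun M => by rw [siteCondExp_siteCondExp, siteCondExp_siteCondExp, Finset.inter_comm]) hρ
    rw [siteCondExp_siteCondExp, ← Finset.compl_union, ← Finset.insert_eq] at hssa
    rw [Finset.sum_insert hi]
    linarith

theorem statement18_general {ρ : Matrix (∀ i, α i) (∀ i, α i) ℂ} (hρ : ρ.PosSemidef) :
    ((Fintype.card ι : ℝ) - 1) * entropyLn ρ + Real.negMulLog (trace ρ).re ≤
      ∑ i, entropyLn (marginal ρ {i}ᶜ) := by
  have h := entropyLn_siteCondExp_compl_sub_le hρ Finset.univ
  simp only [entropyLn_siteCondExp _ hρ.isHermitian, entropyLn_marginal_empty hρ.isHermitian,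
    Finset.compl_univ, Finset.compl_empty, compl_compl, Finset.sum_singleton,
    Finset.sum_sub_distrib, Finset.sum_add_distrib, Finset.sum_const, Finset.card_univ,
    nsmul_eq_mul, ← Finset.sum_mul] at h
  linarith

end Marginal

lemma reduced_eq_marginal {n k : ℕ} (ρ : Matrix (Fin k → Fin n) (Fin k → Fin n) ℂ)
    (A : Finset (Fin k)) : reduced ρ A = marginal ρ A :=
  rfl

/-- for every density matrix `ρ` on `(ℂ^n)^{⊗k}`,
`(k−1) S(ρ) ≤ ∑_{i=1}^k S(ρ_{{1,…,k}∖{i}})`. -/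
theorem statement18 (n k : ℕ) (hn : 1 ≤ n) (hk : 1 ≤ k)
    (ρ : Matrix (Fin k → Fin n) (Fin k → Fin n) ℂ)
    (hρ : ρ.PosSemidef) (hτ : Matrix.trace ρ = 1) :
    ((k : ℝ) - 1) * entropyLn ρ ≤
      ∑ i : Fin k, entropyLn (reduced ρ ((Finset.univ : Finset (Fin k)) \ {i})) := by
  have : Nonempty (Fin n) := ⟨⟨0, hn⟩⟩
  simpa only [hτ, Complex.one_re, Real.negMulLog_one, add_zero, Fintype.card_fin,
    reduced_eq_marginal, Finset.compl_eq_univ_sdiff] using statement18_general hρ
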